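/- arXiv:1410.2499 — 2 statements merged into one kernel-verified Lean document; each statement's English description precedes it below -/
import Mathlib

section
/- For any step of the nonsmooth generalized-α scheme written in augmented Newmark form with filter parameters ν ≠ 0 and η, the variation of the algorithmic energy satisfies H(q_{k+1},v_{k+1},a_{k+1},z_{k+1}) − H(q_k,v_k,a_k,z_k) − W_ext − W_damp + (η/ν)·(q_{k+1}−q_k)ᵀ( y_{k,γ} − C x_{k,γ} ) = U_{k+1/2}ᵀ P_{k+1} + (1/2)h²(1/2 − γ)(2β − γ)‖a_{k+1}−a_k‖²_M + (η + 1/2 − γ)‖q_{k+1}−q_k‖²_K + (η/ν)(γ − ν − 1/2)‖z_{k+1}−z_k‖²_K. -/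
open Matrix

/-! Every quadratic energy varies over a step by the discrete product rule
`½ (B x' x' - B x x) = B (x' - x) x_γ - (γ - ½) B (x' - x) (x' - x)`, `x_γ = γ x' + (1 - γ) x`.
The balance equation averaged with weight `γ` and tested against `q' - q` is the discrete work
identity. Its stiffness term is the product rule for `q`. The Newmark formulas write `q' - q` as
the trapezoidal rule plus a multiple of `a' - a`, so that its inertial term is the variation of
the kinetic energy, corrected by the contact work and the product rule for `a`. The filter writes
`z_γ` as a combination of `q' - q` and `z' - z`, which turns the remaining term into the
variation of `B z z` plus quadratic terms in these increments. -/

section WeightedMean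

variable {R V W : Type*} [Ring R] [AddCommGroup V] [Module R V] [AddCommGroup W] [Module R W]

/-- The average `x_γ = γ x' + (1 - γ) x` of the values `x` and `x'` at the beginning and at the end
of a time step, at which the discrete work evaluates forces. The weight `γ` belongs to the new
value. -/
def weightedMean (γ : R) (x x' : V) : V :=
  γ • x' + (1 - γ) • x

theorem weightedMean_add (γ : R) (x x' y y' : V) :
    weightedMean γ (x + y) (x' + y') = weightedMean γ x x' + weightedMean γ y y' := by
  simp only [weightedMean, smul_add]
  abel

theorem weightedMean_sub (γ : R) (x x' y y' : V) :
    weightedMean γ (x - y) (x' - y') = weightedMean γ x x' - weightedMean γ y y' := by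
  simp only [weightedMean, smul_sub]
  abel

theorem map_weightedMean (f : V →ₗ[R] W) (γ : R) (x x' : V) :
    f (weightedMean γ x x') = weightedMean γ (f x) (f x') := by
  simp only [weightedMean, map_add, map_smul]

end WeightedMean

section CommRing

variable {R V D : Type*} [CommRing R] [AddCommGroup V] [Module R V] [AddCommGroup D] [Module R D]

theorem weightedMean_smul (γ c : R) (x x' : V) :
    weightedMean γ (c • x) (c • x') = c • weightedMean γ x x' :=
  (map_weightedMean (LinearMap.lsmul R V c) γ x x').symm

theorem weightedMean_balance {M K C : V →ₗ[R] D} {c : R}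
    {q q' v v' a a' z z' x x' : V} {F F' y y' : D}
    (hbal : M a + K q + C v = F + c • (K z + C x - y))
    (hbal' : M a' + K q' + C v' = F' + c • (K z' + C x' - y')) (γ : R) :
    M (weightedMean γ a a') + K (weightedMean γ q q') + C (weightedMean γ v v')
      = weightedMean γ F F' + c • (K (weightedMean γ z z') + C (weightedMean γ x x')
        - weightedMean γ y y') := by
  simp only [map_weightedMean, ← weightedMean_add, ← weightedMean_sub, ← weightedMean_smul,
    hbal, hbal']

theorem bilinForm_sub_add_of_isSymm {B : LinearMap.BilinForm R V} (hB : B.IsSymm) (x y : V) :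
    B (x - y) (x + y) = B x x - B y y := by
  simp only [map_add, map_sub, LinearMap.sub_apply, hB.eq y x]
  ring

end CommRing

section Increments

variable {𝕜 V : Type*} [Field 𝕜] [NeZero (2 : 𝕜)] [AddCommGroup V] [Module 𝕜 V]
  {B : LinearMap.BilinForm 𝕜 V} {h γ β ν : 𝕜} {q q' v v' a a' z z' w : V}

theorem weightedMean_eq_half_smul_add_smul_sub (γ : 𝕜) (x x' : V) :
    weightedMean γ x x' = (1 / 2 : 𝕜) • (x' + x) + (γ - 1 / 2) • (x' - x) := by
  unfold weightedMean
  match_scalars <;> field_simp <;> ring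

theorem bilinForm_sub_weightedMean (hB : B.IsSymm) (γ : 𝕜) (x x' : V) :
    B (x' - x) (weightedMean γ x x')
      = 1 / 2 * (B x' x' - B x x) + (γ - 1 / 2) * B (x' - x) (x' - x) := by
  rw [weightedMean_eq_half_smul_add_smul_sub, map_add, map_smul, map_smul,
    bilinForm_sub_add_of_isSymm hB, smul_eq_mul, smul_eq_mul]

theorem newmark_displacement_increment
    (hv : v' = v + (h * (1 - γ)) • a + (h * γ) • a' + w)
    (hq : q' = q + h • v + (h ^ 2 * (1 / 2 - β)) • a + (h ^ 2 * β) • a' + (h / 2) • w) :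
    q' - q = h • (1 / 2 : 𝕜) • (v' + v) + (h ^ 2 / 2 * (2 * β - γ)) • (a' - a) := by
  rw [hq, hv]
  match_scalars <;> field_simp <;> ring

theorem newmark_kinetic_energy_increment (hB : B.IsSymm)
    (hv : v' = v + (h * (1 - γ)) • a + (h * γ) • a' + w)
    (hq : q' = q + h • v + (h ^ 2 * (1 / 2 - β)) • a + (h ^ 2 * β) • a' + (h / 2) • w) :
    1 / 2 * (B v' v' - B v v) + h ^ 2 / 4 * (2 * β - γ) * (B a' a' - B a a)
      = B (q' - q) (weightedMean γ a a') + B ((1 / 2 : 𝕜) • (v + v')) w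
        + 1 / 2 * h ^ 2 * (1 / 2 - γ) * (2 * β - γ) * B (a' - a) (a' - a) := by
  have velocity_increment : v' - v = h • weightedMean γ a a' + w := by
    rw [hv, weightedMean]
    module
  have kinetic : B v' v' - B v v = B (v' + v) (h • weightedMean γ a a' + w) := by
    rw [← velocity_increment, hB.eq (v' + v), bilinForm_sub_add_of_isSymm hB]
  have displacement : B (q' - q) (weightedMean γ a a')
      = h * (1 / 2 * B (v' + v) (weightedMean γ a a'))
        + h ^ 2 / 2 * (2 * β - γ) * B (a' - a) (weightedMean γ a a') := by
    rw [newmark_displacement_increment hv hq]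
    simp only [map_add, map_smul, LinearMap.add_apply, LinearMap.smul_apply, smul_eq_mul]
  rw [kinetic, displacement, bilinForm_sub_weightedMean hB, add_comm v v', map_add, map_smul,
    map_smul, LinearMap.smul_apply, smul_eq_mul, smul_eq_mul,
    show (4 : 𝕜) = 2 * 2 by norm_num]
  field_simp
  ring

theorem filter_weightedMean
    (hz : ν • (z' - z) + (1 / 2 : 𝕜) • (z' + z) = ν • (q' - q)) (γ : 𝕜) :
    weightedMean γ z z' = ν • (q' - q) + (γ - ν - 1 / 2) • (z' - z) := by
  rw [weightedMean_eq_half_smul_add_smul_sub, ← hz]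
  module

theorem filter_energy_increment (hB : B.IsSymm) (hν : ν ≠ 0)
    (hz : ν • (z' - z) + (1 / 2 : 𝕜) • (z' + z) = ν • (q' - q)) (γ η : 𝕜) :
    η / (2 * ν ^ 2) * (ν - (γ - 1 / 2)) * (B z' z' - B z z)
        + η / ν * B (q' - q) (weightedMean γ z z')
      = η * B (q' - q) (q' - q) + η / ν * (γ - ν - 1 / 2) * B (z' - z) (z' - z) := by
  have cross : 1 / 2 * (B z' z' - B z z)
      = ν * B (q' - q) (z' - z) - ν * B (z' - z) (z' - z) := by
    have tested := congrArg (B (z' - z)) hz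
    simp only [map_add (B (z' - z)) (ν • _), map_smul, bilinForm_sub_add_of_isSymm hB, smul_eq_mul]
      at tested
    rw [hB.eq (q' - q)]
    linear_combination tested
  have mean : B (q' - q) (weightedMean γ z z')
      = ν * B (q' - q) (q' - q) + (γ - ν - 1 / 2) * B (q' - q) (z' - z) := by
    rw [filter_weightedMean hz, map_add, map_smul, map_smul, smul_eq_mul, smul_eq_mul]
  calc η / (2 * ν ^ 2) * (ν - (γ - 1 / 2)) * (B z' z' - B z z)
        + η / ν * B (q' - q) (weightedMean γ z z')
      = η / ν ^ 2 * (ν - (γ - 1 / 2)) * (1 / 2 * (B z' z' - B z z))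
        + η / ν * B (q' - q) (weightedMean γ z z') := by
        field_simp
    _ = η * B (q' - q) (q' - q) + η / ν * (γ - ν - 1 / 2) * B (z' - z) (z' - z) := by
        rw [cross, mean]
        field_simp
        ring

end Increments

section Energy

variable {𝕜 V D : Type*} [Field 𝕜] [AddCommGroup V] [Module 𝕜 V] [AddCommGroup D] [Module 𝕜 D]

/-- The total mechanical energy `E(q, v)` for the kinetic form `M` and the stiffness form `K`. -/
def mechanicalEnergy (M K : LinearMap.BilinForm 𝕜 V) (q v : V) : 𝕜 :=
  1 / 2 * M v v + 1 / 2 * K q q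

/-- The algorithmic energy `H(q, v, a, z)` of the scheme: the mechanical energy corrected by
quadratic terms in the acceleration `a` and in the filter variable `z`. -/
def algorithmicEnergy (M K : LinearMap.BilinForm 𝕜 V) (h γ β η ν : 𝕜) (q v a z : V) : 𝕜 :=
  mechanicalEnergy M K q v + h ^ 2 / 4 * (2 * β - γ) * M a a
    + η / (2 * ν ^ 2) * (ν - (γ - 1 / 2)) * K z z

/-- Displacements live in `V` and forces in `D`, with `pair d f` the work of the force `f` along
the displacement `d`; `r` is the contact impulse `G P`. -/
theorem nonsmooth_generalized_alpha_algorithmic_energy_general [NeZero (2 : 𝕜)]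
    (pair : V →ₗ[𝕜] D →ₗ[𝕜] 𝕜) {M K C : V →ₗ[𝕜] D}
    (hM : LinearMap.BilinForm.IsSymm (pair.compl₂ M))
    (hK : LinearMap.BilinForm.IsSymm (pair.compl₂ K))
    {h γ β η ν : 𝕜} (hν : ν ≠ 0)
    {q q' v v' a a' z z' x x' w : V} {F F' y y' r : D}
    (hbal : M a + K q + C v = F + (η / ν) • (K z + C x - y))
    (hbal' : M a' + K q' + C v' = F' + (η / ν) • (K z' + C x' - y'))
    (hw : M w = r)
    (hv : v' = v + (h * (1 - γ)) • a + (h * γ) • a' + w)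
    (hq : q' = q + h • v + (h ^ 2 * (1 / 2 - β)) • a + (h ^ 2 * β) • a' + (h / 2) • w)
    (hz : ν • (z' - z) + (1 / 2 : 𝕜) • (z' + z) = ν • (q' - q)) :
    algorithmicEnergy (pair.compl₂ M) (pair.compl₂ K) h γ β η ν q' v' a' z'
      - algorithmicEnergy (pair.compl₂ M) (pair.compl₂ K) h γ β η ν q v a z
      - pair (q' - q) (weightedMean γ F F')
      - (-pair (q' - q) (C (weightedMean γ v v')))
      + η / ν * pair (q' - q) (weightedMean γ y y' - C (weightedMean γ x x'))
    = pair ((1 / 2 : 𝕜) • (v + v')) r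
      + 1 / 2 * h ^ 2 * (1 / 2 - γ) * (2 * β - γ) * pair (a' - a) (M (a' - a))
      + (η + 1 / 2 - γ) * pair (q' - q) (K (q' - q))
      + η / ν * (γ - ν - 1 / 2) * pair (z' - z) (K (z' - z)) := by
  have work := congrArg (pair (q' - q)) (weightedMean_balance hbal hbal' γ)
  have kinetic := newmark_kinetic_energy_increment hM hv hq
  have stiffness := bilinForm_sub_weightedMean hK γ q q'
  have filter := filter_energy_increment hK hν hz γ η
  generalize q' - q = d at *
  simp only [LinearMap.compl₂_apply, hw] at kinetic stiffness filter
  simp only [map_add (pair d), map_sub (pair d), map_smul (pair d), smul_eq_mul] at work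
  simp only [algorithmicEnergy, mechanicalEnergy, LinearMap.compl₂_apply, map_sub (pair d)]
  linear_combination kinetic + work - stiffness + filter

end Energy

section DotProduct

variable {R ι κ : Type*} [CommRing R] [Fintype ι] [Fintype κ]

theorem isSymm_dotProductBilin_compl₂_mulVecLin {A : Matrix ι ι R} (hA : A.IsSymm) :
    LinearMap.BilinForm.IsSymm ((dotProductBilin R R).compl₂ A.mulVecLin) where
  eq x y := by
    simpa [hA.eq] using dotProduct_transpose_mulVec A x y

theorem smul_transpose_mulVec_add_dotProduct (G : Matrix ι κ R) (c : R) (u v : ι → R) (p : κ → R) :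
    (c • (Gᵀ *ᵥ u + Gᵀ *ᵥ v)) ⬝ᵥ p = (c • (u + v)) ⬝ᵥ (G *ᵥ p) := by
  rw [← mulVec_add, ← mulVec_smul, dotProduct_comm, dotProduct_transpose_mulVec]

end DotProduct

/-- Variation of the algorithmic energy over one step of the nonsmooth
generalized-α scheme written in augmented Newmark form with filters. -/
theorem nonsmooth_generalized_alpha_algorithmic_energy
    (n m : ℕ) (hn : 1 ≤ n) (hm : 1 ≤ m)
    (h γ β η ν : ℝ) (hh : 0 < h) (hν : ν ≠ 0)
    (M K C : Matrix (Fin n) (Fin n) ℝ) (G : Matrix (Fin n) (Fin m) ℝ)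
    (hM : M.PosDef) (hK : K.PosSemidef)
    (qk qk1 vk vk1 ak ak1 Fk Fk1 zk zk1 xk xk1 yk yk1 w : Fin n → ℝ)
    (P : Fin m → ℝ)
    (hbalk : M.mulVec ak + K.mulVec qk + C.mulVec vk
        = Fk + (η / ν) • (K.mulVec zk + C.mulVec xk - yk))
    (hbalk1 : M.mulVec ak1 + K.mulVec qk1 + C.mulVec vk1
        = Fk1 + (η / ν) • (K.mulVec zk1 + C.mulVec xk1 - yk1))
    (hw : M.mulVec w = G.mulVec P)
    (hv : vk1 = vk + (h * (1 - γ)) • ak + (h * γ) • ak1 + w)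
    (hq : qk1 = qk + h • vk + (h ^ 2 * (1/2 - β)) • ak + (h ^ 2 * β) • ak1
        + (h / 2) • w)
    (hz : ν • (zk1 - zk) + (1/2 : ℝ) • (zk1 + zk) = ν • (qk1 - qk)) :
    (1/2 * (vk1 ⬝ᵥ M.mulVec vk1) + 1/2 * (qk1 ⬝ᵥ K.mulVec qk1)
        + h ^ 2 / 4 * (2 * β - γ) * (ak1 ⬝ᵥ M.mulVec ak1)
        + η / (2 * ν ^ 2) * (ν - (γ - 1/2)) * (zk1 ⬝ᵥ K.mulVec zk1))
      - (1/2 * (vk ⬝ᵥ M.mulVec vk) + 1/2 * (qk ⬝ᵥ K.mulVec qk)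
        + h ^ 2 / 4 * (2 * β - γ) * (ak ⬝ᵥ M.mulVec ak)
        + η / (2 * ν ^ 2) * (ν - (γ - 1/2)) * (zk ⬝ᵥ K.mulVec zk))
      - (qk1 - qk) ⬝ᵥ (γ • Fk1 + (1 - γ) • Fk)
      - (-((qk1 - qk) ⬝ᵥ C.mulVec (γ • vk1 + (1 - γ) • vk)))
      + (η / ν) * ((qk1 - qk) ⬝ᵥ
          ((γ • yk1 + (1 - γ) • yk) - C.mulVec (γ • xk1 + (1 - γ) • xk)))
    = ((1/2 : ℝ) • (Gᵀ.mulVec vk + Gᵀ.mulVec vk1)) ⬝ᵥ P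
      + 1/2 * h ^ 2 * (1/2 - γ) * (2 * β - γ) * ((ak1 - ak) ⬝ᵥ M.mulVec (ak1 - ak))
      + (η + 1/2 - γ) * ((qk1 - qk) ⬝ᵥ K.mulVec (qk1 - qk))
      + (η / ν) * (γ - ν - 1/2) * ((zk1 - zk) ⬝ᵥ K.mulVec (zk1 - zk)) := by
  rw [smul_transpose_mulVec_add_dotProduct]
  exact nonsmooth_generalized_alpha_algorithmic_energy_general (dotProductBilin ℝ ℝ)
    (M := M.mulVecLin) (K := K.mulVecLin) (C := C.mulVecLin)
    (isSymm_dotProductBilin_compl₂_mulVecLin (isHermitian_iff_isSymm.mp hM.isHermitian))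
    (isSymm_dotProductBilin_compl₂_mulVecLin (isHermitian_iff_isSymm.mp hK.isHermitian))
    hν hbalk hbalk1 hw hv hq hz
end

section
/- If the parameters satisfy 2β ≥ γ ≥ 1/2 and 0 ≤ η ≤ γ − 1/2 ≤ ν, and the local velocities and impulse satisfy the discrete contact conditions, then any step of the nonsmooth Krenk–Høgsberg generalized-α scheme in augmented Newmark form is stable in the sense that H(q_{k+1},v_{k+1},a_{k+1},z_{k+1}) − H(q_k,v_k,a_k,z_k) − W_ext − W_damp ≤ 0. -/
open Matrix

/-!
Write `Δx = x' - x` and `x_γ = γ x' + (1 - γ) x`. For symmetric `A`, the pairing `Δx · A x_γ` is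
half the increment of `x · A x` plus `(γ - 1/2) Δx · A Δx`. The balance at `k` and `k + 1`,
weighted by `1 - γ` and `γ` and tested with `Δq`, then becomes an exact energy identity once the
Newmark kinematics are solved for `Δq` (in terms of `v + v'` and `Δa`) and the filter for `z_γ`
(in terms of `Δq` and `Δz`): the algorithmic energy changes by the external and damping works,
plus the impact work `(v + v') · M w / 2`, minus nonnegative multiples of the quadratic forms of
`Δa`, `Δq`, `Δz`. The restitution law makes the impact work nonpositive.
-/

section SymmetricForm

variable {𝕜 n : Type*} [Fintype n]

theorem dotProduct_mulVec_comm_of_isSymm [CommSemiring 𝕜] {A : Matrix n n 𝕜} (hA : A.IsSymm)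
    (x y : n → 𝕜) : x ⬝ᵥ A *ᵥ y = y ⬝ᵥ A *ᵥ x := by
  rw [← dotProduct_transpose_mulVec, hA.eq]

theorem sub_dotProduct_mulVec_add_of_isSymm [CommRing 𝕜] {A : Matrix n n 𝕜} (hA : A.IsSymm)
    (x y : n → 𝕜) : (y - x) ⬝ᵥ A *ᵥ (y + x) = y ⬝ᵥ A *ᵥ y - x ⬝ᵥ A *ᵥ x := by
  rw [mulVec_add, dotProduct_add, sub_dotProduct, sub_dotProduct,
    dotProduct_mulVec_comm_of_isSymm hA y x]
  ring

theorem add_dotProduct_mulVec_sub_of_isSymm [CommRing 𝕜] {A : Matrix n n 𝕜} (hA : A.IsSymm)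
    (x y : n → 𝕜) : (y + x) ⬝ᵥ A *ᵥ (y - x) = y ⬝ᵥ A *ᵥ y - x ⬝ᵥ A *ᵥ x := by
  rw [dotProduct_mulVec_comm_of_isSymm hA, sub_dotProduct_mulVec_add_of_isSymm hA]

theorem sub_dotProduct_mulVec_weighted_of_isSymm [Field 𝕜] [CharZero 𝕜] {A : Matrix n n 𝕜}
    (hA : A.IsSymm) (θ : 𝕜) (x y : n → 𝕜) :
    (y - x) ⬝ᵥ A *ᵥ (θ • y + (1 - θ) • x)
      = 1 / 2 * (y ⬝ᵥ A *ᵥ y - x ⬝ᵥ A *ᵥ x) + (θ - 1 / 2) * ((y - x) ⬝ᵥ A *ᵥ (y - x)) := by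
  have hmean : θ • y + (1 - θ) • x = (1 / 2 : 𝕜) • (y + x) + (θ - 1 / 2) • (y - x) := by module
  rw [hmean, mulVec_add, mulVec_smul, mulVec_smul, dotProduct_add, dotProduct_smul,
    dotProduct_smul, sub_dotProduct_mulVec_add_of_isSymm hA, smul_eq_mul, smul_eq_mul]

end SymmetricForm

theorem add_dotProduct_nonpos_of_restitution {𝕜 m : Type*} [Fintype m]
    [CommRing 𝕜] [PartialOrder 𝕜] [IsOrderedRing 𝕜]
    {U U' P e : m → 𝕜} {I : Set m} (he : ∀ α ∈ I, e α ≤ 1) (hPout : ∀ α ∉ I, P α = 0)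
    (hU : ∀ α ∈ I, U α ≤ 0) (hP : ∀ α ∈ I, 0 ≤ P α)
    (hcompl : ∀ α ∈ I, (U' α + e α * U α) * P α = 0) : (U' + U) ⬝ᵥ P ≤ 0 := by
  refine Finset.sum_nonpos fun α _ => ?_
  by_cases hα : α ∈ I
  · calc (U' α + U α) * P α = (U' α + e α * U α) * P α + (1 - e α) * U α * P α := by ring
      _ = (1 - e α) * U α * P α := by rw [hcompl α hα, zero_add]
      _ ≤ 0 := mul_nonpos_of_nonpos_of_nonneg
          (mul_nonpos_of_nonneg_of_nonpos (sub_nonneg.2 (he α hα)) (hU α hα)) (hP α hα)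
  · rw [hPout α hα, mul_zero]

/-- The data of a Krenk–Høgsberg generalized-α scheme in augmented Newmark form: time step `h`,
algorithmic parameters `γ`, `β`, `η`, `ν`, and mass, stiffness and damping matrices. -/
structure KHScheme (𝕜 n : Type*) where
  (h γ β η ν : 𝕜)
  (M K C : Matrix n n 𝕜)

/-- The vectors of one time level: position `q`, velocity `v`, acceleration `a`, applied
force `F` and filter variable `z`. -/
structure KHState (𝕜 n : Type*) where
  (q v a F z : n → 𝕜)

namespace KHScheme

section Identities

variable {𝕜 n : Type*} [Fintype n] [Field 𝕜] (S : KHScheme 𝕜 n) (s s' : KHState 𝕜 n)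

/-- The augmented balance of momentum at one time level. Since `ν` divides, it is meaningful only
for `ν ≠ 0`. -/
def IsBalanced : Prop :=
  S.M *ᵥ s.a + S.K *ᵥ s.q + S.C *ᵥ s.v = s.F + (S.η / S.ν) • S.K *ᵥ s.z

/-- A step of the scheme from `s` to `s'` with velocity jump `w`. The law `M w = G P` tying `w` to
the contact impulse is kept separate, as it does not enter the energy balance. -/
structure IsStep (w : n → 𝕜) : Prop where
  isBalanced_left : S.IsBalanced s
  isBalanced_right : S.IsBalanced s'
  velocity : s'.v = s.v + (S.h * (1 - S.γ)) • s.a + (S.h * S.γ) • s'.a + w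
  position : s'.q = s.q + S.h • s.v + (S.h ^ 2 * (1 / 2 - S.β)) • s.a + (S.h ^ 2 * S.β) • s'.a
    + (S.h / 2) • w
  filter : S.ν • (s'.z - s.z) + (1 / 2 : 𝕜) • (s'.z + s.z) = S.ν • (s'.q - s.q)

/-- The algorithmic energy `H`: the total mechanical energy corrected by quadratic terms in the
acceleration and the filter variable. -/
def algorithmicEnergy : 𝕜 :=
  1 / 2 * (s.v ⬝ᵥ S.M *ᵥ s.v) + 1 / 2 * (s.q ⬝ᵥ S.K *ᵥ s.q)
    + S.h ^ 2 / 4 * (2 * S.β - S.γ) * (s.a ⬝ᵥ S.M *ᵥ s.a)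
    + S.η / (2 * S.ν ^ 2) * (S.ν - (S.γ - 1 / 2)) * (s.z ⬝ᵥ S.K *ᵥ s.z)

/-- The discrete external work `W_ext` over a step. -/
def externalWork : 𝕜 := (s'.q - s.q) ⬝ᵥ (S.γ • s'.F + (1 - S.γ) • s.F)

/-- The discrete work `W_damp` of the damping forces over a step. -/
def dampingWork : 𝕜 := -((s'.q - s.q) ⬝ᵥ S.C *ᵥ (S.γ • s'.v + (1 - S.γ) • s.v))

/-- The energy removed by the time discretization over a step, a combination of the quadratic forms
of the increments of acceleration, position and filter variable. -/
def numericalDissipation : 𝕜 :=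
  S.h ^ 2 * (S.β - S.γ / 2) * (S.γ - 1 / 2) * ((s'.a - s.a) ⬝ᵥ S.M *ᵥ (s'.a - s.a))
    + (S.γ - 1 / 2 - S.η) * ((s'.q - s.q) ⬝ᵥ S.K *ᵥ (s'.q - s.q))
    + S.η * (1 - (S.γ - 1 / 2) / S.ν) * ((s'.z - s.z) ⬝ᵥ S.K *ᵥ (s'.z - s.z))

namespace IsStep

variable {S s s'} {w : n → 𝕜}

theorem velocity_sub (hs : S.IsStep s s' w) :
    s'.v - s.v = S.h • (S.γ • s'.a + (1 - S.γ) • s.a) + w := by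
  rw [hs.velocity]
  module

theorem weighted_balance (hs : S.IsStep s s' w) :
    S.M *ᵥ (S.γ • s'.a + (1 - S.γ) • s.a) + S.K *ᵥ (S.γ • s'.q + (1 - S.γ) • s.q)
        + S.C *ᵥ (S.γ • s'.v + (1 - S.γ) • s.v)
      = S.γ • s'.F + (1 - S.γ) • s.F
        + (S.η / S.ν) • S.K *ᵥ (S.γ • s'.z + (1 - S.γ) • s.z) := by
  have hleft := hs.isBalanced_left
  have hright := hs.isBalanced_right
  rw [IsBalanced] at hleft hright
  simp only [mulVec_add, mulVec_smul]
  linear_combination (norm := module) S.γ • hright + (1 - S.γ) • hleft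

theorem externalWork_eq (hs : S.IsStep s s' w) :
    S.externalWork s s'
      = (s'.q - s.q) ⬝ᵥ S.M *ᵥ (S.γ • s'.a + (1 - S.γ) • s.a)
        + (s'.q - s.q) ⬝ᵥ S.K *ᵥ (S.γ • s'.q + (1 - S.γ) • s.q)
        - S.dampingWork s s'
        - S.η / S.ν * ((s'.q - s.q) ⬝ᵥ S.K *ᵥ (S.γ • s'.z + (1 - S.γ) • s.z)) := by
  rw [externalWork, dampingWork, eq_sub_of_add_eq hs.weighted_balance.symm, dotProduct_sub,
    dotProduct_add, dotProduct_add, dotProduct_smul, smul_eq_mul, sub_neg_eq_add]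

variable [CharZero 𝕜]

theorem position_sub (hs : S.IsStep s s' w) :
    s'.q - s.q = (S.h / 2) • (s'.v + s.v) + (S.h ^ 2 * (S.β - S.γ / 2)) • (s'.a - s.a) := by
  rw [hs.position, hs.velocity]
  module

theorem kinetic_balance (hs : S.IsStep s s' w) (hM : S.M.IsSymm) :
    1 / 2 * (s'.v ⬝ᵥ S.M *ᵥ s'.v - s.v ⬝ᵥ S.M *ᵥ s.v)
        + S.h ^ 2 / 4 * (2 * S.β - S.γ) * (s'.a ⬝ᵥ S.M *ᵥ s'.a - s.a ⬝ᵥ S.M *ᵥ s.a)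
      = (s'.q - s.q) ⬝ᵥ S.M *ᵥ (S.γ • s'.a + (1 - S.γ) • s.a)
        + 1 / 2 * ((s'.v + s.v) ⬝ᵥ S.M *ᵥ w)
        - S.h ^ 2 * (S.β - S.γ / 2) * (S.γ - 1 / 2)
          * ((s'.a - s.a) ⬝ᵥ S.M *ᵥ (s'.a - s.a)) := by
  have hkinetic : s'.v ⬝ᵥ S.M *ᵥ s'.v - s.v ⬝ᵥ S.M *ᵥ s.v
      = S.h * ((s'.v + s.v) ⬝ᵥ S.M *ᵥ (S.γ • s'.a + (1 - S.γ) • s.a))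
        + (s'.v + s.v) ⬝ᵥ S.M *ᵥ w := by
    rw [← add_dotProduct_mulVec_sub_of_isSymm hM, hs.velocity_sub, mulVec_add, mulVec_smul,
      dotProduct_add, dotProduct_smul, smul_eq_mul]
  have hinertial : (s'.q - s.q) ⬝ᵥ S.M *ᵥ (S.γ • s'.a + (1 - S.γ) • s.a)
      = S.h / 2 * ((s'.v + s.v) ⬝ᵥ S.M *ᵥ (S.γ • s'.a + (1 - S.γ) • s.a))
        + S.h ^ 2 * (S.β - S.γ / 2)
          * ((s'.a - s.a) ⬝ᵥ S.M *ᵥ (S.γ • s'.a + (1 - S.γ) • s.a)) := by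
    rw [hs.position_sub, add_dotProduct, smul_dotProduct, smul_dotProduct, smul_eq_mul,
      smul_eq_mul]
  rw [hinertial, hkinetic, sub_dotProduct_mulVec_weighted_of_isSymm hM]
  ring

theorem weighted_filter (hs : S.IsStep s s' w) :
    S.γ • s'.z + (1 - S.γ) • s.z
      = S.ν • (s'.q - s.q) - (S.ν - (S.γ - 1 / 2)) • (s'.z - s.z) := by
  rw [← hs.filter]
  module

theorem filter_balance (hs : S.IsStep s s' w) (hK : S.K.IsSymm) (hν : S.ν ≠ 0) :
    S.η / (2 * S.ν ^ 2) * (S.ν - (S.γ - 1 / 2)) * (s'.z ⬝ᵥ S.K *ᵥ s'.z - s.z ⬝ᵥ S.K *ᵥ s.z)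
      = S.η * ((s'.q - s.q) ⬝ᵥ S.K *ᵥ (s'.q - s.q))
        - S.η / S.ν * ((s'.q - s.q) ⬝ᵥ S.K *ᵥ (S.γ • s'.z + (1 - S.γ) • s.z))
        - S.η * (1 - (S.γ - 1 / 2) / S.ν) * ((s'.z - s.z) ⬝ᵥ S.K *ᵥ (s'.z - s.z)) := by
  have hfilter : 1 / 2 * (s'.z ⬝ᵥ S.K *ᵥ s'.z - s.z ⬝ᵥ S.K *ᵥ s.z)
      = S.ν * ((s'.q - s.q) ⬝ᵥ S.K *ᵥ (s'.z - s.z))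
        - S.ν * ((s'.z - s.z) ⬝ᵥ S.K *ᵥ (s'.z - s.z)) := by
    have hmean : (1 / 2 : 𝕜) • (s'.z + s.z) = S.ν • (s'.q - s.q) - S.ν • (s'.z - s.z) :=
      eq_sub_of_add_eq' hs.filter
    rw [← add_dotProduct_mulVec_sub_of_isSymm hK, ← smul_eq_mul, ← smul_dotProduct, hmean,
      sub_dotProduct, smul_dotProduct, smul_dotProduct, smul_eq_mul, smul_eq_mul]
  have hweighted : (s'.q - s.q) ⬝ᵥ S.K *ᵥ (S.γ • s'.z + (1 - S.γ) • s.z)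
      = S.ν * ((s'.q - s.q) ⬝ᵥ S.K *ᵥ (s'.q - s.q))
        - (S.ν - (S.γ - 1 / 2)) * ((s'.q - s.q) ⬝ᵥ S.K *ᵥ (s'.z - s.z)) := by
    rw [hs.weighted_filter, mulVec_sub S.K (S.ν • _), mulVec_smul, mulVec_smul, dotProduct_sub,
      dotProduct_smul, dotProduct_smul, smul_eq_mul, smul_eq_mul]
  rw [hweighted]
  field_simp
  linear_combination 2 * S.η * (S.ν * 2 - (2 * S.γ - 1)) * hfilter

theorem algorithmicEnergy_balance (hs : S.IsStep s s' w) (hM : S.M.IsSymm) (hK : S.K.IsSymm)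
    (hν : S.ν ≠ 0) :
    S.algorithmicEnergy s' - S.algorithmicEnergy s - S.externalWork s s' - S.dampingWork s s'
      = 1 / 2 * ((s'.v + s.v) ⬝ᵥ S.M *ᵥ w) - S.numericalDissipation s s' := by
  rw [hs.externalWork_eq, algorithmicEnergy, algorithmicEnergy, numericalDissipation]
  linear_combination hs.kinetic_balance hM + hs.filter_balance hK hν
    - sub_dotProduct_mulVec_weighted_of_isSymm hK S.γ s.q s'.q

end IsStep

end Identities

section Stability

variable {𝕜 n : Type*} [Fintype n]
  [Field 𝕜] [LinearOrder 𝕜] [IsStrictOrderedRing 𝕜] [StarRing 𝕜] [TrivialStar 𝕜]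
  {S : KHScheme 𝕜 n} {s s' : KHState 𝕜 n}

theorem numericalDissipation_nonneg (hM : S.M.PosSemidef) (hK : S.K.PosSemidef) (hν : 0 < S.ν)
    (hβ : S.γ ≤ 2 * S.β) (hη : 0 ≤ S.η) (hηγ : S.η ≤ S.γ - 1 / 2) (hγν : S.γ - 1 / 2 ≤ S.ν) :
    0 ≤ S.numericalDissipation s s' := by
  have form_nonneg {A : Matrix n n 𝕜} (hA : A.PosSemidef) (x : n → 𝕜) : 0 ≤ x ⬝ᵥ A *ᵥ x := by
    simpa only [star_trivial] using hA.dotProduct_mulVec_nonneg x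
  have hβ' : 0 ≤ S.β - S.γ / 2 := by linarith
  have hγν' : 0 ≤ 1 - (S.γ - 1 / 2) / S.ν := sub_nonneg.2 ((div_le_one hν).2 hγν)
  exact add_nonneg (add_nonneg
    (mul_nonneg (mul_nonneg (mul_nonneg (sq_nonneg _) hβ') (hη.trans hηγ)) (form_nonneg hM _))
    (mul_nonneg (sub_nonneg.2 hηγ) (form_nonneg hK _)))
    (mul_nonneg (mul_nonneg hη hγν') (form_nonneg hK _))

end Stability

end KHScheme

theorem nonsmooth_KH_generalized_alpha_stable_general
    {𝕜 m n : Type*} [Fintype m] [Fintype n]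
    [Field 𝕜] [LinearOrder 𝕜] [IsStrictOrderedRing 𝕜] [StarRing 𝕜] [TrivialStar 𝕜]
    {S : KHScheme 𝕜 n} {s s' : KHState 𝕜 n} {w : n → 𝕜} {G : Matrix n m 𝕜}
    {P e : m → 𝕜} {I : Set m} (hs : S.IsStep s s' w) (hw : S.M *ᵥ w = G *ᵥ P)
    (hM : S.M.PosSemidef) (hK : S.K.PosSemidef) (hν : 0 < S.ν)
    (he : ∀ α ∈ I, e α ≤ 1) (hPout : ∀ α ∉ I, P α = 0)
    (hU : ∀ α ∈ I, (Gᵀ *ᵥ s.v) α ≤ 0) (hP : ∀ α ∈ I, 0 ≤ P α)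
    (hcompl : ∀ α ∈ I, ((Gᵀ *ᵥ s'.v) α + e α * (Gᵀ *ᵥ s.v) α) * P α = 0)
    (hβ : S.γ ≤ 2 * S.β) (hη : 0 ≤ S.η) (hηγ : S.η ≤ S.γ - 1 / 2) (hγν : S.γ - 1 / 2 ≤ S.ν) :
    S.algorithmicEnergy s' - S.algorithmicEnergy s - S.externalWork s s' - S.dampingWork s s'
      ≤ 0 := by
  have himpact : (s'.v + s.v) ⬝ᵥ S.M *ᵥ w ≤ 0 := by
    rw [hw, dotProduct_mulVec, ← mulVec_transpose, mulVec_add]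
    exact add_dotProduct_nonpos_of_restitution he hPout hU hP hcompl
  have hdiss : 0 ≤ S.numericalDissipation s s' :=
    KHScheme.numericalDissipation_nonneg hM hK hν hβ hη hηγ hγν
  rw [hs.algorithmicEnergy_balance (isHermitian_iff_isSymm.1 hM.isHermitian)
    (isHermitian_iff_isSymm.1 hK.isHermitian) hν.ne']
  linarith

/-- Stability of the nonsmooth Krenk–Høgsberg generalized-α scheme:
under `2β ≥ γ ≥ 1/2`, `0 ≤ η ≤ γ − 1/2 ≤ ν` and the discrete contact
conditions, the algorithmic energy decreases up to the external and damping
works. -/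
theorem nonsmooth_KH_generalized_alpha_stable
    (n m : ℕ) (hn : 1 ≤ n) (hm : 1 ≤ m)
    (h γ β η ν : ℝ) (hh : 0 < h) (hν : 0 < ν)
    (M K C : Matrix (Fin n) (Fin n) ℝ) (G : Matrix (Fin n) (Fin m) ℝ)
    (hM : M.PosDef) (hK : K.PosSemidef)
    (qk qk1 vk vk1 ak ak1 Fk Fk1 zk zk1 w : Fin n → ℝ)
    (P : Fin m → ℝ)
    (hbalk : M.mulVec ak + K.mulVec qk + C.mulVec vk = Fk + (η / ν) • K.mulVec zk)
    (hbalk1 : M.mulVec ak1 + K.mulVec qk1 + C.mulVec vk1 = Fk1 + (η / ν) • K.mulVec zk1)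
    (hw : M.mulVec w = G.mulVec P)
    (hv : vk1 = vk + (h * (1 - γ)) • ak + (h * γ) • ak1 + w)
    (hq : qk1 = qk + h • vk + (h ^ 2 * (1/2 - β)) • ak + (h ^ 2 * β) • ak1
        + (h / 2) • w)
    (hz : ν • (zk1 - zk) + (1/2 : ℝ) • (zk1 + zk) = ν • (qk1 - qk))
    (e : Fin m → ℝ) (I₁ : Finset (Fin m))
    (he : ∀ α, 0 ≤ e α ∧ e α ≤ 1)
    (hPout : ∀ α ∉ I₁, P α = 0)
    (hc : ∀ α ∈ I₁, Gᵀ.mulVec vk α ≤ 0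
        ∧ 0 ≤ Gᵀ.mulVec vk1 α + e α * Gᵀ.mulVec vk α
        ∧ 0 ≤ P α
        ∧ (Gᵀ.mulVec vk1 α + e α * Gᵀ.mulVec vk α) * P α = 0)
    (hβ : γ ≤ 2 * β) (hγ : 1/2 ≤ γ)
    (hη0 : 0 ≤ η) (hηγ : η ≤ γ - 1/2) (hγν : γ - 1/2 ≤ ν) :
    (1/2 * (vk1 ⬝ᵥ M.mulVec vk1) + 1/2 * (qk1 ⬝ᵥ K.mulVec qk1)
        + h ^ 2 / 4 * (2 * β - γ) * (ak1 ⬝ᵥ M.mulVec ak1)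
        + η / (2 * ν ^ 2) * (ν - (γ - 1/2)) * (zk1 ⬝ᵥ K.mulVec zk1))
      - (1/2 * (vk ⬝ᵥ M.mulVec vk) + 1/2 * (qk ⬝ᵥ K.mulVec qk)
        + h ^ 2 / 4 * (2 * β - γ) * (ak ⬝ᵥ M.mulVec ak)
        + η / (2 * ν ^ 2) * (ν - (γ - 1/2)) * (zk ⬝ᵥ K.mulVec zk))
      - (qk1 - qk) ⬝ᵥ (γ • Fk1 + (1 - γ) • Fk)
      - (-((qk1 - qk) ⬝ᵥ C.mulVec (γ • vk1 + (1 - γ) • vk))) ≤ 0 := by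
  exact nonsmooth_KH_generalized_alpha_stable_general (S := ⟨h, γ, β, η, ν, M, K, C⟩)
    (s := ⟨qk, vk, ak, Fk, zk⟩) (s' := ⟨qk1, vk1, ak1, Fk1, zk1⟩) (I := I₁)
    ⟨hbalk, hbalk1, hv, hq, hz⟩ hw hM.posSemidef hK hν (fun α _ => (he α).2) hPout
    (fun α hα => (hc α hα).1) (fun α hα => (hc α hα).2.2.1) (fun α hα => (hc α hα).2.2.2)
    hβ hη0 hηγ hγν
end
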